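/- arXiv:1605.04677 — 2 statements merged into one kernel-verified Lean document; each statement's English description precedes it below -/
import Mathlib

section
/- Let k be a field, A' = k[[x]] the ring of formal power series over k, A₁ = k[x]_{(x)} the localization of the polynomial ring k[x] at the prime ideal (x), regarded as a subring of k[[x]]. Let B be a k-algebra of finite type, v : B → A' a k-algebra morphism, B₁ = A₁ ⊗_k B, and let v₁ : B₁ → A' be the induced A₁-algebra morphism given by a₁ ⊗ b ↦ a₁ · v(b). If v₁ factors through a smooth A₁-algebra, then v factors through a smooth k-algebra, i.e., v is a composite of k-algebra morphisms B → C → A' with C smooth over k. -/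
universe u

open TensorProduct

instance spanX_isPrime (k : Type u) [Field k] :
    (Ideal.span {Polynomial.X} : Ideal (Polynomial k)).IsPrime :=
  (Ideal.span_singleton_prime Polynomial.X_ne_zero).mpr Polynomial.prime_X

/-- `A₁ = k[x]_{(x)}`, the localization of the polynomial ring `k[x]` at the prime
ideal `(x)`. -/
abbrev LocAtX (k : Type u) [Field k] :=
  Localization.AtPrime (Ideal.span {Polynomial.X} : Ideal (Polynomial k))

/-- Every polynomial outside the prime ideal `(X)` becomes a unit in `k⟦X⟧`. -/
theorem primeCompl_isUnit_coe (k : Type u) [Field k]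
    (y : (Ideal.span {Polynomial.X} : Ideal (Polynomial k)).primeCompl) :
    IsUnit (Polynomial.coeToPowerSeries.ringHom (y : Polynomial k)) := by
  rw [PowerSeries.isUnit_iff_constantCoeff]
  have h0 : (y : Polynomial k).coeff 0 ≠ 0 := fun h =>
    y.2 (Ideal.mem_span_singleton.mpr (Polynomial.X_dvd_iff.mpr h))
  simpa using (isUnit_iff_ne_zero.mpr h0)

/-- The canonical inclusion of `k[x]_{(x)}` into the formal power series ring `k⟦x⟧`,
sending `f / g` (with `g (0) ≠ 0`) to `f * g⁻¹`. -/
noncomputable def canonicalInclusion (k : Type u) [Field k] :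
    LocAtX k →+* PowerSeries k :=
  IsLocalization.lift (S := LocAtX k)
    (g := Polynomial.coeToPowerSeries.ringHom) (primeCompl_isUnit_coe k)

/-- `k⟦x⟧` regarded as an algebra over `k[x]_{(x)}` via the canonical inclusion. -/
noncomputable instance powerSeriesAlgebraLocAtX (k : Type u) [Field k] :
    Algebra (LocAtX k) (PowerSeries k) :=
  (canonicalInclusion k).toAlgebra

/-- The canonical inclusion `k[x]_{(x)} → k⟦x⟧` as a morphism of `k`-algebras. -/
noncomputable def canonicalInclusionAlgHom (k : Type u) [Field k] :
    LocAtX k →ₐ[k] PowerSeries k :=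
  { canonicalInclusion k with
    commutes' := fun r => by
      have h : (algebraMap k (LocAtX k)) r =
          algebraMap (Polynomial k) (LocAtX k) (Polynomial.C r) := by
        rw [← Polynomial.algebraMap_eq, ← IsScalarTower.algebraMap_apply]
      show canonicalInclusion k (algebraMap k (LocAtX k) r) = _
      rw [h, canonicalInclusion, IsLocalization.lift_eq]
      simp [PowerSeries.C_eq_algebraMap] }

theorem AlgHom.fg_range {k S E : Type*} [CommRing k] [CommRing S] [CommRing E] [Algebra k S]
    [Algebra k E] [Algebra.FiniteType k S] (ψ : S →ₐ[k] E) : ψ.range.FG := by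
  rw [← Algebra.map_top]
  exact Subalgebra.FG.map _ Algebra.FiniteType.out

/-- Let `A` be a localization of a ring `R` and `E` an `A`-algebra generated by `t`. If a
`k`-subalgebra `D` of `E` contains `t` and the image of `R`, then `E` is the localization of `D`
at the elements of `D` that are invertible in `E`. -/
theorem Subalgebra.isLocalization_comap_isUnit {k R A E : Type*} [CommRing k] [CommRing R]
    [CommRing A] [CommRing E] [Algebra R A] [Algebra k E] [Algebra A E]
    (M : Submonoid R) [IsLocalization M A] {t : Set E} (ht : Algebra.adjoin A t = ⊤)
    (D : Subalgebra k E) (htD : t ⊆ D)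
    (hRD : ∀ r : R, algebraMap A E (algebraMap R A r) ∈ D) :
    IsLocalization ((IsUnit.submonoid E).comap (algebraMap D E)) E := by
  have key (z : E) : ∃ s : M, z * algebraMap A E (algebraMap R A s) ∈ D := by
    have hz : z ∈ Algebra.adjoin A t := ht ▸ Algebra.mem_top
    induction hz using Algebra.adjoin_induction with
    | mem x hx => exact ⟨1, by simpa using htD hx⟩
    | algebraMap a =>
      obtain ⟨⟨r, s⟩, h⟩ := IsLocalization.surj M a
      exact ⟨s, by rw [← map_mul, h]; exact hRD r⟩
    | add x y _ _ hx hy =>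
      obtain ⟨s, hs⟩ := hx
      obtain ⟨u, hu⟩ := hy
      refine ⟨s * u, ?_⟩
      convert D.add_mem (D.mul_mem hs (hRD u)) (D.mul_mem hu (hRD s)) using 1
      simp only [Submonoid.coe_mul, map_mul]
      ring
    | mul x y _ _ hx hy =>
      obtain ⟨s, hs⟩ := hx
      obtain ⟨u, hu⟩ := hy
      refine ⟨s * u, ?_⟩
      convert D.mul_mem hs hu using 1
      simp only [Submonoid.coe_mul, map_mul]
      ring
  rw [isLocalization_iff]
  refine ⟨fun y => y.2, fun z => ?_, fun {x y} h => ⟨1, by rw [Subtype.ext h]⟩⟩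
  obtain ⟨s, hs⟩ := key z
  exact ⟨(⟨_, hs⟩, ⟨⟨_, hRD s⟩, (IsLocalization.map_units A s).map (algebraMap A E)⟩), rfl⟩

/-- If a localization `E` of `D` is formally smooth over `k`, then `D` is smooth over `k` at the
contraction of every prime of `E`. -/
theorem Algebra.isSmoothAt_comap_of_isLocalization {k D E : Type*} [CommRing k] [CommRing D]
    [CommRing E] [Algebra k D] [Algebra k E] [Algebra D E] [IsScalarTower k D E]
    (N : Submonoid D) [IsLocalization N E] [Algebra.FormallySmooth k E]
    (q : Ideal E) [q.IsPrime] : Algebra.IsSmoothAt k (q.comap (algebraMap D E)) := by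
  have : Algebra.FormallySmooth E (Localization.AtPrime q) := .of_isLocalization q.primeCompl
  have : Algebra.FormallySmooth k (Localization.AtPrime q) := .comp k E _
  have : IsLocalization.AtPrime (Localization.AtPrime q) (q.comap (algebraMap D E)) :=
    IsLocalization.isLocalization_isLocalization_atPrime_isLocalization N _ q
  exact .of_equiv ((IsLocalization.algEquiv (q.comap (algebraMap D E)).primeCompl
    (Localization.AtPrime q) (Localization.AtPrime _)).restrictScalars k)

/-- Let `A` be a formally smooth localization of a `k`-algebra `R` of finite type over a Noetherian
ring `k`. A `k`-morphism from an algebra of finite type to a local ring that factors through a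
smooth `A`-algebra factors through a smooth `k`-algebra. -/
theorem Algebra.Smooth.exists_factorization_of_isLocalization {k R A B L : Type*} {E : Type u}
    [CommRing k] [IsNoetherianRing k] [CommRing R] [CommRing A] [CommRing B] [CommRing E]
    [CommRing L] [IsLocalRing L] [Algebra k R] [Algebra k A] [Algebra k B] [Algebra k E]
    [Algebra k L] [Algebra R A] [IsScalarTower k R A] [Algebra A E] [IsScalarTower k A E]
    [Algebra.FiniteType k R] [Algebra.FiniteType k B] [Algebra.FormallySmooth k A]
    (M : Submonoid R) [IsLocalization M A] [Algebra.Smooth A E]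
    (φ : B →ₐ[k] E) (g : E →ₐ[k] L) :
    ∃ (C : Type u) (_ : CommRing C) (_ : Algebra k C), Algebra.Smooth k C ∧
      ∃ (f : B →ₐ[k] C) (g' : C →ₐ[k] L), g.comp φ = g'.comp f := by
  obtain ⟨t, ht⟩ := (inferInstance : Algebra.FiniteType A E).out
  let ρ : R →ₐ[k] E := (IsScalarTower.toAlgHom k A E).comp (IsScalarTower.toAlgHom k R A)
  let D : Subalgebra k E := (ρ.range ⊔ φ.range) ⊔ Algebra.adjoin k (t : Set E)
  have hρD : ρ.range ≤ D := le_sup_left.trans le_sup_left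
  have hφD : φ.range ≤ D := le_sup_right.trans le_sup_left
  have htD : (t : Set E) ⊆ D :=
    Algebra.subset_adjoin.trans (SetLike.coe_subset_coe.mpr le_sup_right)
  have hD : D.FG := .sup (.sup ρ.fg_range φ.fg_range) ⟨t, rfl⟩
  have : Algebra.FiniteType k D := D.fg_iff_finiteType.mp hD
  have : Algebra.FinitePresentation k D := Algebra.FinitePresentation.of_finiteType.mp this
  have := D.isLocalization_comap_isUnit M ht htD fun r => hρD ⟨r, rfl⟩
  have : Algebra.FormallySmooth k E := .comp k A E
  let q : Ideal E := (IsLocalRing.maximalIdeal L).comap g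
  have := Algebra.isSmoothAt_comap_of_isLocalization (k := k)
    ((IsUnit.submonoid E).comap (algebraMap D E)) q
  obtain ⟨h, hq, hsmooth⟩ :=
    Algebra.IsSmoothAt.exists_notMem_smooth k (q.comap (algebraMap D E))
  have hunit : IsUnit (g h) := by simpa [q] using hq
  have hpow (y : Submonoid.powers h) : IsUnit ((g.comp D.val) y) := by
    obtain ⟨_, n, rfl⟩ := y
    simpa using hunit.pow n
  refine ⟨Localization.Away h, inferInstance, inferInstance, hsmooth,
    (IsScalarTower.toAlgHom k D _).comp (φ.codRestrict D fun b => hφD ⟨b, rfl⟩),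
    IsLocalization.liftAlgHom (M := Submonoid.powers h) (f := g.comp D.val) hpow, ?_⟩
  ext b
  simp

/-- If the induced morphism `v₁ : A₁ ⊗_k B → k⟦x⟧`, `a₁ ⊗ b ↦ a₁ ⬝ v b`, factors through
a smooth `A₁ = k[x]_{(x)}`-algebra, then `v : B → k⟦x⟧` factors through a smooth
`k`-algebra. -/
theorem factors_through_smooth_of_factors_over_localization
    (k : Type u) [Field k] (B : Type u) [CommRing B] [Algebra k B]
    (hB : Algebra.FiniteType k B) (v : B →ₐ[k] PowerSeries k)
    (hfac : ∃ (Ct : Type u) (_ : CommRing Ct) (_ : Algebra (LocAtX k) Ct),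
      Algebra.Smooth (LocAtX k) Ct ∧
      ∃ (f : (LocAtX k ⊗[k] B) →ₐ[LocAtX k] Ct) (g : Ct →ₐ[LocAtX k] PowerSeries k),
        ∀ y : LocAtX k ⊗[k] B,
          g (f y) = Algebra.TensorProduct.productMap (canonicalInclusionAlgHom k) v y) :
    ∃ (C : Type u) (_ : CommRing C) (_ : Algebra k C), Algebra.Smooth k C ∧
      ∃ (f : B →ₐ[k] C) (g : C →ₐ[k] PowerSeries k), v = g.comp f := by
  obtain ⟨E, _, _, _, f, g, hfg⟩ := hfac
  let : Algebra k E := Algebra.compHom E (algebraMap k (LocAtX k))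
  have : IsScalarTower k (LocAtX k) E := .of_algebraMap_eq fun _ => rfl
  have : IsScalarTower k (LocAtX k) (PowerSeries k) :=
    .of_algebraMap_eq fun r => ((canonicalInclusionAlgHom k).commutes r).symm
  have : Algebra.FormallySmooth (Polynomial k) (LocAtX k) :=
    .of_isLocalization (Ideal.span {Polynomial.X}).primeCompl
  have : Algebra.FormallySmooth k (LocAtX k) := .comp k (Polynomial k) (LocAtX k)
  obtain ⟨C, _, _, hC, f', g', h⟩ := Algebra.Smooth.exists_factorization_of_isLocalization
    (A := LocAtX k) (Ideal.span {Polynomial.X} : Ideal (Polynomial k)).primeCompl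
    ((f.restrictScalars k).comp Algebra.TensorProduct.includeRight) (g.restrictScalars k)
  refine ⟨C, inferInstance, inferInstance, hC, f', g', ?_⟩
  rw [← h]
  ext1 b
  simpa using (hfg (1 ⊗ₜ b)).symm
end

section
/- Let k be a field and B a k-algebra of finite type. Then every k-algebra morphism v : B → k[[x]] into the ring of formal power series over k factors through a smooth k-algebra C, i.e., v is a composite of k-algebra morphisms B → C → k[[x]] with C smooth over k. -/
universe u

section

open MvPolynomial
open scoped TensorProduct

lemma exists_smooth_of_jacobian {k A : Type u} [CommRing k] [CommRing A] [Algebra k A] {ι : Type}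
    [Fintype ι] [DecidableEq ι] (g : ι → MvPolynomial ι A) (h : MvPolynomial ι A) :
    ∃ (C : Type u) (_ : CommRing C) (_ : Algebra A C) (_ : Algebra k C) (_ : IsScalarTower k A C)
      (t : ι → C), Algebra.Smooth A C ∧ (∀ i, aeval t (g i) = 0) ∧ IsUnit (aeval t h) ∧
      ∀ (S : Type u) [CommRing S] [Algebra A S] (s : ι → S), (∀ i, aeval s (g i) = 0) →
        IsUnit (aeval s h) → IsUnit (aeval s (Matrix.of fun i j ↦ pderiv i (g j)).det) →
        ∃ φ : C →ₐ[A] S, ∀ i, φ (t i) = s i := by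
  set d := (Matrix.of fun i j ↦ pderiv i (g j)).det with hd
  let rel : ι ⊕ Unit → MvPolynomial (ι ⊕ Unit) A :=
    Sum.elim (fun i ↦ rename Sum.inl (g i)) fun j ↦ rename Sum.inl (d * h) * X (Sum.inr j) - 1
  let I := Ideal.span (Set.range rel)
  let C := MvPolynomial (ι ⊕ Unit) A ⧸ I
  let P : Algebra.PreSubmersivePresentation A C (ι ⊕ Unit) (ι ⊕ Unit) :=
    .naive id Function.injective_id
  let t : ι → C := fun i ↦ Ideal.Quotient.mk I (X (Sum.inl i))
  have haeval : ∀ p : MvPolynomial ι A, aeval t p = Ideal.Quotient.mk I (rename Sum.inl p) := by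
    intro p
    have : (aeval t : MvPolynomial ι A →ₐ[A] C) =
        (Ideal.Quotient.mkₐ A I).comp (rename Sum.inl) := by
      ext i; simp [t]
    simp [this]
  have hrel : ∀ i, Ideal.Quotient.mk I (rel i) = 0 := fun i ↦
    Ideal.Quotient.eq_zero_iff_mem.mpr (Ideal.subset_span ⟨i, rfl⟩)
  have hunit : IsUnit (aeval t (d * h)) := by
    refine IsUnit.of_mul_eq_one (Ideal.Quotient.mk I (X (Sum.inr ()))) ?_
    have := hrel (Sum.inr ())
    simp only [rel, Sum.elim_inr, map_sub, map_mul, map_one, sub_eq_zero] at this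
    rw [haeval, ← this]
    simp
  rw [map_mul, IsUnit.mul_iff] at hunit
  have hjac : P.jacobiMatrix = Matrix.fromBlocks
      ((rename Sum.inl : MvPolynomial ι A →ₐ[A] _).toRingHom.mapMatrix
        (Matrix.of fun i j ↦ pderiv i (g j)))
      (Matrix.of fun i j ↦ pderiv (Sum.inl i) (rel (Sum.inr j))) 0
      (Matrix.of fun _ _ ↦ rename Sum.inl (d * h)) := by
    ext i j : 1
    rw [Algebra.PreSubmersivePresentation.jacobiMatrix_naive]
    have h0 : ∀ p : MvPolynomial ι A, pderiv (Sum.inr () : ι ⊕ Unit) (rename Sum.inl p) = 0 := by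
      intro p
      refine pderiv_eq_zero_of_notMem_vars fun hm ↦ ?_
      classical
      simpa using vars_rename _ _ hm
    rcases i with i | ⟨⟩ <;> rcases j with j | ⟨⟩
    · simp [rel, pderiv_rename Sum.inl_injective]
    · simp
    · simp [rel, h0]
    · simp [rel, Derivation.leibniz, h0, -map_mul]
  have hPunit : IsUnit P.jacobian := by
    rw [P.jacobian_eq_jacobiMatrix_det, hjac, Matrix.det_fromBlocks_zero₂₁, ← RingHom.map_det,
      ← hd, map_mul]
    have e : ∀ p : MvPolynomial (ι ⊕ Unit) A, algebraMap P.Ring C p = Ideal.Quotient.mk I p := by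
      intro p
      rw [P.algebraMap_apply]
      have : (aeval P.val : MvPolynomial (ι ⊕ Unit) A →ₐ[A] C) = Ideal.Quotient.mkₐ A I := by
        ext i; simp [P]; rfl
      rw [this]; rfl
    erw [e]
    simp only [Matrix.det_unique, Matrix.of_apply]
    refine IsUnit.mul ((haeval d) ▸ hunit.1) ?_
    rw [show algebraMap P.Ring C (rename Sum.inl (d * h)) = _ from e _, ← haeval, map_mul]
    exact hunit.1.mul hunit.2
  have : Algebra.IsStandardSmooth A C := ⟨_, _, _, inferInstance, ⟨⟨P, hPunit⟩⟩⟩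
  refine ⟨C, inferInstance, inferInstance, inferInstance, inferInstance, t, inferInstance, ?_,
    hunit.2, ?_⟩
  · intro i
    rw [haeval]
    exact hrel (Sum.inl i)
  · intro S _ _ s hg hh hdet
    let s' : ι ⊕ Unit → S := Sum.elim s fun _ ↦ ((hdet.mul hh).unit⁻¹ : Sˣ)
    have hs' : ∀ p : MvPolynomial ι A, aeval s' (rename Sum.inl p) = aeval s p := by
      intro p
      rw [aeval_rename]; rfl
    refine ⟨Ideal.Quotient.liftₐ I (aeval s') ?_, fun i ↦ ?_⟩
    · suffices I ≤ RingHom.ker (aeval s' : _ →ₐ[A] S) from fun a ha ↦ this ha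
      refine Ideal.span_le.mpr ?_
      rintro _ ⟨i | i, rfl⟩
      · simp [rel, hs', hg]
      · have := (hdet.mul hh).mul_val_inv
        simp only [rel, Sum.elim_inr, SetLike.mem_coe, RingHom.mem_ker, map_sub, map_mul, hs',
          aeval_X, map_one, s', sub_eq_zero]
        exact this
    · exact (Ideal.Quotient.lift_mk ..).trans (aeval_X _ _)

lemma exists_smooth_lift_of_powerSeries {k : Type u} [Field k] {ι : Type} [Finite ι]
    (y : ι → PowerSeries k) (N : ℕ) :
    ∃ (A : Type u) (_ : CommRing A) (_ : IsDomain A) (_ : Algebra k A) (_ : Algebra.Smooth k A)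
      (ψ : A →ₐ[k] PowerSeries k) (x : A) (y' : ι → A), ψ x = PowerSeries.X ∧
      (∀ i, ψ (y' i) = y i) ∧ ∀ (P : MvPolynomial ι k), ∀ m ≤ N,
        PowerSeries.X ^ m ∣ aeval y P → x ^ m ∣ aeval y' P := by
  have hw : ∀ i, ∃ w : PowerSeries k,
      y i = ((PowerSeries.trunc N (y i) : Polynomial k) : PowerSeries k) +
        PowerSeries.X ^ N * w := by
    intro i
    have : (PowerSeries.X : PowerSeries k) ^ N ∣
        y i - ((PowerSeries.trunc N (y i) : Polynomial k) : PowerSeries k) := by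
      rw [PowerSeries.X_pow_dvd_iff]
      intro m hm
      simp [PowerSeries.coeff_trunc, hm]
    obtain ⟨w, hw⟩ := this
    exact ⟨w, by rw [← hw]; ring⟩
  choose w hw using hw
  let A := MvPolynomial ι (Polynomial k)
  let c : Polynomial k →ₐ[k] PowerSeries k := Polynomial.coeToPowerSeries.algHom k
  let ψ : A →ₐ[k] PowerSeries k :=
    { toRingHom := eval₂Hom c.toRingHom w
      commutes' := fun r ↦ by
        change eval₂Hom c.toRingHom w (algebraMap k A r) = _
        rw [IsScalarTower.algebraMap_apply k (Polynomial k) A, MvPolynomial.algebraMap_eq,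
          eval₂Hom_C]
        exact c.commutes r }
  have hψC : ∀ p, ψ (C p) = (p : PowerSeries k) := fun p ↦ by
    change eval₂Hom c.toRingHom w (C p) = _
    rw [eval₂Hom_C]; simp [c, Polynomial.coeToPowerSeries.algHom]
  have hψX : ∀ i, ψ (X i) = w i := fun i ↦ eval₂Hom_X' _ _ _
  let x : A := C Polynomial.X
  have hx : ψ x = PowerSeries.X := by simp [x, hψC]
  let y' : ι → A := fun i ↦ C (PowerSeries.trunc N (y i)) + x ^ N * X i
  have hy' : ∀ i, ψ (y' i) = y i := fun i ↦ by simp [y', hψC, hψX, hx, ← hw]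
  have : Algebra.Smooth k (Polynomial k) := {}
  have : Algebra.Smooth (Polynomial k) A := {}
  have : Algebra.Smooth k A := .comp k (Polynomial k) A
  refine ⟨A, inferInstance, inferInstance, inferInstance, inferInstance, ψ, x, y', hx, hy', ?_⟩
  intro P m hm hP
  have hP' : ψ (aeval y' P) = aeval y P := by
    rw [← AlgHom.comp_apply, comp_aeval]; simp [hy']
  let D : Subalgebra k A :=
    (IsScalarTower.toAlgHom k (Polynomial k) (A ⧸ Ideal.span {x ^ N})).range.comap
    (Ideal.Quotient.mkₐ k (Ideal.span {x ^ N}))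
  have hD : aeval y' P ∈ D := by
    have hy'D : ∀ i, y' i ∈ D := fun i ↦ by
      refine ⟨PowerSeries.trunc N (y i), ?_⟩
      refine (Ideal.Quotient.eq (I := Ideal.span {x ^ N}) (x := C _)).mpr ?_
      rw [Ideal.mem_span_singleton]
      exact ⟨-X i, by simp only [y']; ring⟩
    have : (aeval y' P) = D.val (aeval (fun i ↦ (⟨y' i, hy'D i⟩ : D)) P) := by
      rw [← AlgHom.comp_apply, comp_aeval]; rfl
    rw [this]
    exact Subtype.prop _
  obtain ⟨p, hp⟩ := hD
  replace hp : C p - aeval y' P ∈ Ideal.span {x ^ N} := (Ideal.Quotient.eq).mp hp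
  rw [Ideal.mem_span_singleton] at hp
  have hp' := map_dvd ψ hp
  rw [map_sub, hP', hψC, map_pow, hx] at hp'
  have hpX : (PowerSeries.X : PowerSeries k) ^ m ∣ (p : PowerSeries k) := by
    have := dvd_add ((pow_dvd_pow _ hm).trans hp') hP
    rwa [sub_add_cancel] at this
  have hpm : (Polynomial.X : Polynomial k) ^ m ∣ p := by
    rw [Polynomial.X_pow_dvd_iff]
    rw [PowerSeries.X_pow_dvd_iff] at hpX
    simpa using hpX
  have h1 : x ^ m ∣ C p := by
    have := map_dvd (C : Polynomial k →+* A) hpm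
    rwa [map_pow] at this
  have := dvd_sub h1 ((pow_dvd_pow _ hm).trans hp)
  rwa [sub_sub_cancel] at this

lemma PowerSeries.eq_zero_of_sum_C_mul_pow_eq_zero {k : Type*} [Field k] {p : ℕ}
    {Λ : Type*} [Fintype Λ] {e : Λ → k}
    (he : ∀ c : Λ → k, ∑ l, e l * c l ^ p = 0 → ∀ l, c l = 0) (σ : Λ → PowerSeries k)
    (hσ : ∑ l, PowerSeries.C (e l) * σ l ^ p = 0) (l : Λ) : σ l = 0 := by
  have key : ∀ (m : ℕ) (σ : Λ → PowerSeries k),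
      ∑ l, PowerSeries.C (e l) * σ l ^ p = 0 → ∀ l, (PowerSeries.X : PowerSeries k) ^ m ∣ σ l := by
    intro m
    induction m with
    | zero => simp
    | succ m ih =>
      intro σ hσ
      have h0 : ∀ l, PowerSeries.constantCoeff (σ l) = 0 :=
        he _ (by simpa using congrArg PowerSeries.constantCoeff hσ)
      choose τ hτ using fun l ↦ PowerSeries.X_dvd_iff.mpr (h0 l)
      have hτ0 : ∑ l, PowerSeries.C (e l) * τ l ^ p = 0 := by
        have hX : (PowerSeries.X : PowerSeries k) ^ p ≠ 0 := pow_ne_zero _ PowerSeries.X_ne_zero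
        refine (mul_eq_zero.mp ?_).resolve_left hX
        rw [← hσ, Finset.mul_sum]
        exact Finset.sum_congr rfl fun l _ ↦ by rw [hτ l]; ring
      intro l
      rw [hτ l, pow_succ']
      exact mul_dvd_mul_left _ (ih τ hτ0 l)
  ext m
  exact PowerSeries.X_pow_dvd_iff.mp (key (m + 1) σ hσ l) m (Nat.lt_succ_self m)

lemma linearIndependent_pow_of_algHom {k K F : Type*} [Field k] [Field K] [Algebra k K]
    [Field F] [Algebra k F] [Algebra (PowerSeries k) F] [IsScalarTower k (PowerSeries k) F]
    [IsFractionRing (PowerSeries k) F] (j : K →ₐ[k] F) {p : ℕ} [ExpChar k p]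
    {ι : Type*} [Fintype ι] {s : ι → K} (hs : LinearIndependent k s) :
    LinearIndependent k fun i ↦ s i ^ p := by
  rw [Fintype.linearIndependent_iff]
  intro a ha
  have hp : p ≠ 0 := (expChar_pos k p).ne'
  have : ExpChar F p := expChar_of_injective_algebraMap (algebraMap k F).injective p
  let k₀ := (frobenius k p).fieldRange
  let V : Submodule k₀ k := Submodule.span k₀ (Set.range a)
  have : FiniteDimensional k₀ V := FiniteDimensional.span_of_finite k₀ (Set.finite_range a)
  let e := Module.finBasis k₀ V
  have haV : ∀ i, a i ∈ V := fun i ↦ Submodule.subset_span ⟨i, rfl⟩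
  have hb : ∀ i l, ∃ b : k, b ^ p = (e.repr ⟨a i, haV i⟩ l : k) := fun i l ↦
    (e.repr ⟨a i, haV i⟩ l).2
  choose b hb using hb
  have hab : ∀ i, a i = ∑ l, (e l : k) * b i l ^ p := fun i ↦ by
    have := congrArg (Subtype.val) (e.sum_repr ⟨a i, haV i⟩)
    simp only [AddSubmonoidClass.coe_finsetSum, Submodule.coe_smul] at this
    rw [← this]
    refine Finset.sum_congr rfl fun l _ ↦ ?_
    rw [hb, mul_comm]; rfl
  have he : ∀ c : Fin (Module.finrank k₀ V) → k, ∑ l, (e l : k) * c l ^ p = 0 → ∀ l, c l = 0 := by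
    intro c hc l
    have hli := Fintype.linearIndependent_iff.mp e.linearIndependent
      (fun l ↦ ⟨c l ^ p, c l, rfl⟩) (by
        ext
        simp only [AddSubmonoidClass.coe_finsetSum, Submodule.coe_smul, Submodule.coe_zero]
        rw [← hc]
        exact Finset.sum_congr rfl fun l _ ↦ mul_comm _ _) l
    exact pow_eq_zero_iff hp |>.mp (congrArg Subtype.val hli)
  let σ : Fin (Module.finrank k₀ V) → F := fun l ↦ ∑ i, algebraMap k F (b i l) * j (s i)
  have hσ : ∑ l, algebraMap k F (e l) * σ l ^ p = 0 := by
    have h := congrArg j ha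
    rw [map_zero] at h
    rw [← h]
    simp only [σ, sum_pow_char, map_sum, map_pow, Algebra.smul_def, hab, map_mul,
      mul_pow, Finset.mul_sum, Finset.sum_mul]
    rw [Finset.sum_comm]
    simp [mul_assoc]
  obtain ⟨d, hd⟩ := IsLocalization.exist_integer_multiples_of_finite
    (nonZeroDivisors (PowerSeries k)) σ
  choose τ hτ using hd
  have hd0 : algebraMap (PowerSeries k) F d ≠ 0 := by
    simp
  have hτ0 : ∑ l, PowerSeries.C (e l : k) * τ l ^ p = 0 := by
    apply IsFractionRing.injective (PowerSeries k) F
    rw [map_zero, map_sum, ← mul_zero (algebraMap (PowerSeries k) F d ^ p), ← hσ, Finset.mul_sum]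
    refine Finset.sum_congr rfl fun l _ ↦ ?_
    rw [map_mul, map_pow, hτ, IsScalarTower.algebraMap_apply k (PowerSeries k) F, Algebra.smul_def]
    simp only [PowerSeries.algebraMap_eq, mul_pow]
    ring
  have hσ0 : ∀ l, σ l = 0 := fun l ↦ by
    have := hτ l
    rw [PowerSeries.eq_zero_of_sum_C_mul_pow_eq_zero he τ hτ0 l, map_zero,
      Algebra.smul_def] at this
    exact (mul_eq_zero.mp this.symm).resolve_left hd0
  have hb0 : ∀ i l, b i l = 0 := fun i l ↦ by
    refine Fintype.linearIndependent_iff.mp hs (fun i ↦ b i l) ?_ i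
    apply j.injective
    rw [map_zero, ← hσ0 l, map_sum]
    simp [σ, Algebra.smul_def]
  intro i
  rw [hab]
  simp [hb0, hp]

lemma Algebra.FormallySmooth.of_algHom_fractionRing_powerSeries {k K F : Type*} [Field k] [Field K]
    [Algebra k K] [Algebra.EssFiniteType k K]
    [Field F] [Algebra k F] [Algebra (PowerSeries k) F] [IsScalarTower k (PowerSeries k) F]
    [IsFractionRing (PowerSeries k) F] (j : K →ₐ[k] F) : Algebra.FormallySmooth k K := by
  obtain _ | ⟨p, hp, _⟩ := CharP.exists' k
  · infer_instance
  have : ExpChar k p := .prime hp.out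
  obtain ⟨s, hs, H⟩ :=
    exists_isTranscendenceBasis_and_isSeparable_of_linearIndepOn_pow_of_essFiniteType (k := k)
      (K := K) p hp.out fun s hs ↦ linearIndependent_pow_of_algHom (F := F) j hs
  have : Algebra.IsSeparable (IntermediateField.adjoin k (Set.range ((↑) : s → K))) K := by
    convert! H <;> simp
  exact .of_algebraicIndependent_of_isSeparable hs.1

lemma Derivation.map_mvPolynomial_aeval {k S M σ : Type*} [Fintype σ] [CommRing k] [CommRing S]
    [Algebra k S] [AddCommGroup M] [Module k M] [Module S M] [IsScalarTower k S M]
    (D : Derivation k S M) (y : σ → S) (p : MvPolynomial σ k) :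
    D (aeval y p) = ∑ i, aeval y (pderiv i p) • D (y i) := by
  classical
  induction p using MvPolynomial.induction_on with
  | C a => simp
  | add p q hp hq => simp [hp, hq, add_smul, Finset.sum_add_distrib]
  | mul_X p j hp =>
    simp only [map_mul, aeval_X, Derivation.leibniz, hp, pderiv_X, map_add, smul_eq_mul, add_smul,
      Finset.sum_add_distrib, Finset.smul_sum, mul_smul]
    congr 1
    rw [Finset.sum_eq_single j]
    · simp
    · intro b _ hb; simp [Pi.single_eq_of_ne hb.symm]
    · simp

lemma algebraMap_mem_sq_of_pderiv_mem {k σ : Type*} [Field k] [Fintype σ]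
    (q : Ideal (MvPolynomial σ k)) [q.IsPrime] [Algebra.FormallySmooth k q.ResidueField]
    {p : MvPolynomial σ k} (hp : p ∈ q) (hp' : ∀ i, pderiv i p ∈ q) :
    algebraMap _ (Localization.AtPrime q) p ∈
      IsLocalRing.maximalIdeal (Localization.AtPrime q) ^ 2 := by
  let P := Localization.AtPrime q
  let K := q.ResidueField
  have hker : RingHom.ker (algebraMap P K) = IsLocalRing.maximalIdeal P :=
    IsLocalRing.ker_residue
  have hmem : ∀ p ∈ q, algebraMap _ P p ∈ RingHom.ker (algebraMap P K) := by
    intro p hp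
    rw [hker]
    exact (IsLocalization.AtPrime.to_map_mem_maximal_iff P q p).mpr hp
  have hinj : Function.Injective (KaehlerDifferential.kerCotangentToTensor k P K) :=
    (Algebra.FormallySmooth.kerCotangentToTensor_injective_iff
      IsLocalRing.residue_surjective).mpr inferInstance
  have haeval : ∀ p : MvPolynomial σ k,
      aeval (fun i ↦ algebraMap (MvPolynomial σ k) P (X i)) p = algebraMap _ P p := by
    intro p
    exact (aeval_algebraMap_apply P X p).trans (by rw [aeval_X_left_apply])
  rw [← hker, ← Ideal.toCotangent_eq_zero _ ⟨_, hmem p hp⟩]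
  apply hinj
  rw [map_zero, KaehlerDifferential.kerCotangentToTensor_toCotangent]
  change (1 : K) ⊗ₜ[P] KaehlerDifferential.D k P (algebraMap _ P p) = 0
  rw [← haeval, Derivation.map_mvPolynomial_aeval, TensorProduct.tmul_sum]
  refine Finset.sum_eq_zero fun i _ ↦ ?_
  rw [haeval, ← TensorProduct.smul_tmul, Algebra.smul_def, mul_one,
    RingHom.mem_ker.mp (hmem _ (hp' i)), TensorProduct.zero_tmul]

lemma exists_notMem_mul_mem_of_map_le {R : Type*} [CommRing R] {q I : Ideal R} [q.IsPrime]
    (hq : q.FG) (h : q.map (algebraMap R (Localization.AtPrime q)) ≤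
      I.map (algebraMap R (Localization.AtPrime q))) :
    ∃ s ∉ q, ∀ p ∈ q, s * p ∈ I := by
  obtain ⟨G, hG⟩ := hq
  have hs : ∀ g ∈ G, ∃ s ∈ q.primeCompl, s * g ∈ I := fun g hg ↦
    (IsLocalization.algebraMap_mem_map_algebraMap_iff _ (Localization.AtPrime q) I g).mp
      (h (Ideal.mem_map_of_mem _ (hG ▸ Ideal.subset_span hg)))
  choose! s hs hsI using hs
  refine ⟨∏ g ∈ G, s g, prod_mem (S := q.primeCompl) hs, fun p hp ↦ ?_⟩
  suffices q ≤ Submodule.comap (LinearMap.mulLeft R (∏ g ∈ G, s g)) I from this hp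
  rw [← hG, Submodule.span_le]
  intro g hg
  obtain ⟨c, hc⟩ := Finset.dvd_prod_of_mem s hg
  simp only [Submodule.comap_coe, Set.mem_preimage, LinearMap.mulLeft_apply, SetLike.mem_coe]
  rw [hc, mul_right_comm]
  exact Ideal.mul_mem_right _ _ (hsI g hg)

lemma Matrix.exists_right_inverse_of_linearIndependent_row {K m n : Type*} [Field K] [Fintype m]
    [Fintype n] [DecidableEq m] [DecidableEq n] {M : Matrix m n K}
    (hM : LinearIndependent K M.row) : ∃ E : Matrix n m K, M * E = 1 := by
  rw [← Matrix.vecMul_injective_iff] at hM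
  obtain ⟨g, hg⟩ := LinearMap.exists_leftInverse_of_injective (Matrix.toLinearMapRight' M)
    (LinearMap.ker_eq_bot.mpr hM)
  refine ⟨g.toMatrixRight', ?_⟩
  apply Matrix.toLinearMapRight'.injective
  rw [Matrix.toLinearMapRight'_mul]
  simpa using hg

lemma map_le_map_span_of_mem_span_pderiv {k σ ι : Type*} [Field k] [Fintype σ] [Fintype ι]
    (q : Ideal (MvPolynomial σ k)) [q.IsPrime] [Algebra.FormallySmooth k q.ResidueField]
    (f : ι → MvPolynomial σ k) (hf : ∀ j, f j ∈ q)
    (hspan : ∀ p ∈ q, (fun l ↦ algebraMap _ q.ResidueField (pderiv l p)) ∈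
      Submodule.span q.ResidueField
        (Set.range fun j l ↦ algebraMap _ q.ResidueField (pderiv l (f j)))) :
    q.map (algebraMap _ (Localization.AtPrime q)) ≤
      (Ideal.span (Set.range f)).map (algebraMap _ (Localization.AtPrime q)) := by
  let P := Localization.AtPrime q
  have hm : q.map (algebraMap _ P) = IsLocalRing.maximalIdeal P :=
    Localization.AtPrime.map_eq_maximalIdeal
  refine Submodule.le_of_le_smul_of_le_jacobson_bot (I := IsLocalRing.maximalIdeal P)
    (IsNoetherian.noetherian _) (IsLocalRing.maximalIdeal_le_jacobson _) ?_
  refine Ideal.map_le_iff_le_comap.mpr fun p hp ↦ ?_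
  obtain ⟨c, hc⟩ := (Submodule.mem_span_range_iff_exists_fun _).mp (hspan p hp)
  choose c' hc' using fun j ↦ IsLocalRing.residue_surjective (R := P) (c j)
  obtain ⟨b, hb⟩ := IsLocalization.exist_integer_multiples_of_finite q.primeCompl c'
  choose a ha using hb
  have hab : ∀ j, algebraMap _ q.ResidueField (a j) =
      algebraMap _ q.ResidueField (b : MvPolynomial σ k) * c j := fun j ↦ by
    have := congrArg (IsLocalRing.residue P) (ha j)
    rw [Algebra.smul_def, map_mul, hc'] at this
    exact this
  have hp0 : ∀ p ∈ q, algebraMap _ q.ResidueField p = 0 := fun p hp ↦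
    Ideal.algebraMap_residueField_eq_zero.mpr hp
  have hmem : (b : MvPolynomial σ k) * p - ∑ j, a j * f j ∈ q :=
    q.sub_mem (q.mul_mem_left _ hp) (q.sum_mem fun j _ ↦ q.mul_mem_left _ (hf j))
  have hsq := algebraMap_mem_sq_of_pderiv_mem q hmem fun l ↦ by
    have := congrFun hc l
    rw [← Ideal.algebraMap_residueField_eq_zero (I := q)]
    simp only [Finset.sum_apply, Pi.smul_apply, smul_eq_mul] at this
    simp only [map_sub, map_sum, Derivation.leibniz, smul_eq_mul, map_add, map_mul, hp0 p hp,
      hp0 _ (hf _), zero_mul, add_zero]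
    rw [← this, Finset.mul_sum, sub_eq_zero]
    exact Finset.sum_congr rfl fun j _ ↦ by rw [hab]; ring
  have hsum : algebraMap _ P (∑ j, a j * f j) ∈
      (Ideal.span (Set.range f)).map (algebraMap _ P) :=
    Ideal.mem_map_of_mem _ (Ideal.sum_mem _ fun j _ ↦
      Ideal.mul_mem_left _ _ (Ideal.subset_span ⟨j, rfl⟩))
  rw [hm, smul_eq_mul, ← sq]
  have hbp := Submodule.add_mem_sup hsum hsq
  rw [← map_add, add_sub_cancel, map_mul] at hbp
  exact (Ideal.unit_mul_mem_iff_mem _ (IsLocalization.map_units P b)).mp hbp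

lemma exists_jacobian_right_inverse {k : Type*} [Field k] {n : ℕ}
    (y : Fin n → PowerSeries k) :
    ∃ (r : ℕ) (f : Fin r → MvPolynomial (Fin n) k) (s : MvPolynomial (Fin n) k) (c : ℕ)
      (E : Fin n → Fin r → PowerSeries k), (∀ j, aeval y (f j) = 0) ∧ aeval y s ≠ 0 ∧
      (∀ p, aeval y p = 0 → s * p ∈ Ideal.span (Set.range f)) ∧
      ∀ i j, ∑ l, aeval y (pderiv l (f j)) * E l i = if j = i then PowerSeries.X ^ c else 0 := by
  classical
  let q := RingHom.ker (aeval y : _ →ₐ[k] PowerSeries k)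
  have hqp : q.IsPrime := RingHom.ker_isPrime _
  let K := q.ResidueField
  let F := FractionRing (PowerSeries k)
  let φ : MvPolynomial (Fin n) k →ₐ[k] F :=
    (IsScalarTower.toAlgHom k (PowerSeries k) F).comp (aeval y)
  have hφ0 : ∀ p, φ p = 0 ↔ aeval y p = 0 := fun p ↦
    map_eq_zero_iff _ (IsFractionRing.injective (PowerSeries k) F)
  let ψ : K →ₐ[k] F := Ideal.ResidueField.liftₐ q φ (fun p hp ↦ (hφ0 p).mpr hp)
    fun p hp ↦ isUnit_iff_ne_zero.mpr fun h ↦ hp ((hφ0 p).mp h)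
  have hψ : ∀ p, ψ (algebraMap _ K p) = algebraMap _ F (aeval y p) := fun p ↦
    Ideal.ResidueField.liftₐ_algebraMap ..
  have : Algebra.EssFiniteType k K := .comp k (Localization.AtPrime q) K
  have : Algebra.FormallySmooth k K := .of_algHom_fractionRing_powerSeries ψ
  let δ : MvPolynomial (Fin n) k → Fin n → K := fun p l ↦ algebraMap _ K (pderiv l p)
  obtain ⟨b, hbt, hbspan, hbli⟩ := exists_linearIndependent K (δ '' q)
  have : Fintype b := hbli.setFinite.fintype
  let e := Fintype.equivFin b
  choose g hg hgδ using fun v : b ↦ hbt v.2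
  let f := g ∘ e.symm
  have hfδ : ∀ j, δ (f j) = e.symm j := fun j ↦ hgδ _
  have hfli : LinearIndependent K fun j ↦ δ (f j) := by
    simp only [hfδ]
    exact hbli.comp _ e.symm.injective
  have hrange : Set.range (fun j ↦ δ (f j)) = b := by
    simp only [hfδ]
    exact (e.symm.surjective.range_comp _).trans Subtype.range_coe
  obtain ⟨s, hsq, hs⟩ := exists_notMem_mul_mem_of_map_le (IsNoetherian.noetherian q)
    (map_le_map_span_of_mem_span_pderiv q f (fun j ↦ hg _) fun p hp ↦ by
      change δ p ∈ Submodule.span K (Set.range fun j ↦ δ (f j))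
      rw [hrange, hbspan]
      exact Submodule.subset_span ⟨p, hp, rfl⟩)
  obtain ⟨E, hE⟩ := Matrix.exists_right_inverse_of_linearIndependent_row
    (M := Matrix.of fun j ↦ δ (f j)) hfli
  obtain ⟨d, hd⟩ := IsLocalization.exist_integer_multiples_of_finite
    (nonZeroDivisors (PowerSeries k)) fun li : Fin n × _ ↦ ψ (E li.1 li.2)
  choose E' hE' using hd
  obtain ⟨c, u, hcu⟩ := IsDiscreteValuationRing.eq_unit_mul_pow_irreducible
    (nonZeroDivisors.ne_zero d.2) PowerSeries.X_irreducible
  refine ⟨_, f, s, c, fun l i ↦ (u⁻¹ : (PowerSeries k)ˣ) * E' (l, i), fun j ↦ hg _, hsq, hs, ?_⟩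
  intro i j
  have hsum : ∑ l, aeval y (pderiv l (f j)) * E' (l, i) =
      if j = i then (d : PowerSeries k) else 0 := by
    apply IsFractionRing.injective (PowerSeries k) F
    have := congrArg ψ (congrFun (congrFun hE j) i)
    simp only [Matrix.mul_apply, Matrix.of_apply, map_sum, map_mul, Matrix.one_apply, δ, hψ] at this
    simp only [map_sum, map_mul, hE', Algebra.smul_def, mul_left_comm _ (algebraMap _ F d.1)]
    rw [← Finset.mul_sum, this]
    split_ifs <;> simp
  simp only [mul_left_comm _ ((u⁻¹ : (PowerSeries k)ˣ) : PowerSeries k)]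
  rw [← Finset.mul_sum, hsum]
  split_ifs
  · rw [hcu, Units.inv_mul_cancel_left]
  · simp

lemma MvPolynomial.exists_aeval_add_mul_eq {k S σ : Type*} [Fintype σ] [CommRing k] [CommRing S]
    [Algebra k S] (y w : σ → S) (z : S) (p : MvPolynomial σ k) :
    ∃ r, aeval (fun i ↦ y i + z * w i) p =
      aeval y p + z * ∑ i, aeval y (pderiv i p) * w i + z ^ 2 * r := by
  classical
  induction p using MvPolynomial.induction_on with
  | C a => exact ⟨0, by simp⟩
  | add p q hp hq =>
    obtain ⟨a, ha⟩ := hp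
    obtain ⟨b, hb⟩ := hq
    refine ⟨a + b, ?_⟩
    simp only [map_add, ha, hb, add_mul, Finset.sum_add_distrib]
    ring
  | mul_X p j hp =>
    obtain ⟨a, ha⟩ := hp
    have hj : ∑ i, aeval y p * aeval y (Pi.single (M := fun _ ↦ MvPolynomial σ k) i 1 j) * w i =
        aeval y p * w j := by
      rw [Finset.sum_eq_single j (fun i _ hi ↦ by simp [Pi.single_eq_of_ne hi.symm]) (by simp)]
      simp
    have hX : ∑ i, y j * aeval y (pderiv i p) * w i = y j * ∑ i, aeval y (pderiv i p) * w i := by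
      simp only [mul_assoc, ← Finset.mul_sum]
    refine ⟨a * (y j + z * w j) + (∑ i, aeval y (pderiv i p) * w i) * w j, ?_⟩
    simp only [map_mul, aeval_X, ha, Derivation.leibniz, smul_eq_mul, map_add, pderiv_X, add_mul,
      Finset.sum_add_distrib, hj, hX]
    ring

lemma exists_jacobian_right_inverse_of_le {k : Type*} [Field k] {n : ℕ}
    (y : Fin n → PowerSeries k) :
    ∃ (r : ℕ) (f : Fin r → MvPolynomial (Fin n) k) (s : MvPolynomial (Fin n) k) (c e : ℕ)
      (E : Fin n → Fin r → PowerSeries k) (u : (PowerSeries k)ˣ), e ≤ c ∧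
      (∀ j, aeval y (f j) = 0) ∧ aeval y s = (PowerSeries.X : PowerSeries k) ^ e * u ∧
      (∀ p, aeval y p = 0 → s * p ∈ Ideal.span (Set.range f)) ∧
      ∀ i j, ∑ l, aeval y (pderiv l (f j)) * E l i = if j = i then PowerSeries.X ^ c else 0 := by
  obtain ⟨r, f, s, c, E, hf, hs, hsf, hE⟩ := exists_jacobian_right_inverse y
  obtain ⟨e, u, hu⟩ := IsDiscreteValuationRing.eq_unit_mul_pow_irreducible hs
    PowerSeries.X_irreducible
  refine ⟨r, f, s, c + e, e, fun l i ↦ E l i * PowerSeries.X ^ e, u, by lia, hf,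
    by rw [hu, mul_comm], hsf, fun i j ↦ ?_⟩
  simp only [← mul_assoc, ← Finset.sum_mul, hE, pow_add]
  split_ifs <;> simp

/-- The desingularization of `k[y]` along `k[y] → k⟦X⟧`: the algebra `k[y]` is replaced by the
étale locus of a Newton-type system of equations over a smooth algebra `A` approximating `y`. -/
lemma exists_smooth_aeval_eq_zero {k : Type u} [Field k] {n : ℕ} (y : Fin n → PowerSeries k) :
    ∃ (C : Type u) (_ : CommRing C) (_ : Algebra k C) (_ : Algebra.Smooth k C) (z : Fin n → C)
      (φ : C →ₐ[k] PowerSeries k), (∀ l, φ (z l) = y l) ∧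
      ∀ p : MvPolynomial (Fin n) k, aeval y p = 0 → aeval z p = 0 := by
  obtain ⟨r, f, s, c, e, E, u, hec, hf, hs, hsf, hE⟩ := exists_jacobian_right_inverse_of_le y
  obtain ⟨A, _, _, _, _, ψ, x, w, hx, hw, hdvd⟩ := exists_smooth_lift_of_powerSeries
    (Sum.elim y fun li : Fin n × Fin r ↦ E li.1 li.2) (2 * c + 1)
  let y' : Fin n → A := fun l ↦ w (.inl l)
  let E' : Fin n → Fin r → A := fun l i ↦ w (.inr (l, i))
  have hψy : ∀ l, ψ (y' l) = y l := fun l ↦ hw _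
  have hψE : ∀ l i, ψ (E' l i) = E l i := fun l i ↦ hw _
  have hdvd' : ∀ p : MvPolynomial (Fin n) k, ∀ m ≤ 2 * c + 1,
      PowerSeries.X ^ m ∣ aeval y p → x ^ m ∣ aeval y' p := fun p m hm h ↦ by
    simpa [aeval_rename, Function.comp_def] using
      hdvd (rename .inl p) m hm (by simpa [aeval_rename, Function.comp_def] using h)
  have hdf : ∀ j, x ^ (2 * c + 1) ∣ aeval y' (f j) := fun j ↦ hdvd' _ _ le_rfl (by simp [hf])
  have hdE : ∀ i j, x ^ c ∣ ∑ l, aeval y' (pderiv l (f j)) * E' l i := fun i j ↦ by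
    have := hdvd (∑ l, rename .inl (pderiv l (f j)) * X (.inr (l, i))) c (by lia) (by
      simp only [map_sum, map_mul, aeval_rename, aeval_X, Sum.elim_comp_inl, Sum.elim_inr, hE]
      split_ifs <;> simp)
    simpa [aeval_rename, Function.comp_def] using this
  have hds : x ^ e ∣ aeval y' s := hdvd' _ _ (by lia) (by simp [hs])
  let Y : Fin n → MvPolynomial (Fin r) A := fun l ↦
    algebraMap A _ (y' l) + algebraMap A _ (x ^ (c + 1)) * ∑ i, algebraMap A _ (E' l i) * X i
  have hY : ∀ p : MvPolynomial (Fin n) k, ∃ q, aeval Y p = algebraMap A _ (aeval y' p) +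
      algebraMap A _ (x ^ (c + 1)) *
        ∑ i, algebraMap A _ (∑ l, aeval y' (pderiv l p) * E' l i) * X i +
      algebraMap A _ (x ^ (2 * c + 2)) * q := fun p ↦ by
    obtain ⟨q, hq⟩ := exists_aeval_add_mul_eq (fun l ↦ algebraMap A (MvPolynomial (Fin r) A) (y' l))
      (fun l ↦ ∑ i, algebraMap A _ (E' l i) * X i) (algebraMap A _ (x ^ (c + 1))) p
    refine ⟨q, hq.trans ?_⟩
    have ha : ∀ p : MvPolynomial (Fin n) k,
        aeval (fun l ↦ algebraMap A (MvPolynomial (Fin r) A) (y' l)) p =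
          algebraMap A _ (aeval y' p) := fun p ↦ aeval_algebraMap_apply ..
    simp only [ha, ← map_pow, ← pow_mul, map_sum, map_mul, Finset.sum_mul, Finset.mul_sum]
    rw [Finset.sum_comm]
    simp only [mul_assoc, mul_comm 2, add_mul, one_mul]
  have hg : ∀ j, ∃ g, aeval Y (f j) = algebraMap A _ (x ^ (2 * c + 1)) * g := fun j ↦ by
    obtain ⟨q, hq⟩ := hY (f j)
    obtain ⟨a, ha⟩ := hdf j
    choose b hb using fun i ↦ hdE i j
    refine ⟨algebraMap A _ a + ∑ i, algebraMap A _ (b i) * X i + algebraMap A _ x * q, ?_⟩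
    simp only [hq, ha, hb, map_mul, mul_assoc, ← Finset.mul_sum, map_pow]
    ring
  have hh : ∃ h, aeval Y s = algebraMap A _ (x ^ e) * h := by
    obtain ⟨q, hq⟩ := hY s
    obtain ⟨a, ha⟩ := hds
    obtain ⟨d, rfl⟩ := Nat.exists_eq_add_of_le hec
    rw [hq, ha]
    generalize ∑ i, algebraMap A (MvPolynomial (Fin r) A)
      (∑ l, aeval y' (pderiv l s) * E' l i) * X i = v
    refine ⟨algebraMap A _ a + algebraMap A _ (x ^ (d + 1)) * v +
      algebraMap A _ (x ^ (e + 2 * d + 2)) * q, ?_⟩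
    simp only [map_mul, map_pow]
    ring
  choose g hg using hg
  obtain ⟨h, hh⟩ := hh
  obtain ⟨C, _, _, _, _, t, _, htg, hth, hC⟩ := exists_smooth_of_jacobian (k := k) g h
  algebraize [ψ.toRingHom]
  have : IsScalarTower k A (PowerSeries k) := .of_algebraMap_eq fun a ↦ (ψ.commutes a).symm
  have hψ : ∀ a, algebraMap A (PowerSeries k) a = ψ a := fun a ↦ rfl
  let ev : MvPolynomial (Fin r) A →ₐ[A] PowerSeries k := aeval 0
  have hev : ∀ p : MvPolynomial (Fin n) k, ev (aeval Y p) = aeval y p := fun p ↦ by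
    have h1 := comp_aeval_apply (f := Y) (ev.restrictScalars k) p
    refine h1.trans (congrArg (fun y ↦ aeval y p) (funext fun l ↦ ?_))
    simp [ev, Y, hψ, hψy]
  have hX : ∀ m, (PowerSeries.X : PowerSeries k) ^ m ≠ 0 := fun m ↦
    pow_ne_zero _ PowerSeries.X_ne_zero
  have hevg : ∀ j, ev (g j) = 0 := fun j ↦ by
    have := congrArg ev (hg j)
    rw [hev, hf, map_mul, AlgHom.commutes, hψ, map_pow, hx] at this
    exact (mul_eq_zero.mp this.symm).resolve_left (hX _)
  have hevh : IsUnit (ev h) := by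
    have := congrArg ev hh
    rw [hev, hs, map_mul, AlgHom.commutes, hψ, map_pow, hx] at this
    exact mul_left_cancel₀ (hX _) this ▸ u.isUnit
  have hevJ : ∀ i j, ev (pderiv i (g j)) = if i = j then 1 else 0 := fun i j ↦ by
    have hD := Derivation.map_mvPolynomial_aeval ((pderiv i).restrictScalars k) Y (f j)
    have hDY : ∀ l, pderiv i (Y l) = algebraMap A _ (x ^ (c + 1)) * algebraMap A _ (E' l i) := by
      intro l
      simp [Y, algebraMap_eq, pderiv_X, Pi.single_apply, Derivation.leibniz]
    simp only [Derivation.restrictScalars_apply, hg, hDY, smul_eq_mul, Derivation.leibniz,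
      Derivation.map_algebraMap, mul_zero, add_zero] at hD
    have := congrArg ev hD
    simp only [map_sum, map_mul, hev, AlgHom.commutes, hψ, hψE, hx, map_pow,
      mul_left_comm _ (PowerSeries.X ^ (c + 1) : PowerSeries k)] at this
    rw [← Finset.mul_sum, hE] at this
    apply mul_left_cancel₀ (hX (2 * c + 1))
    rw [this]
    simp only [eq_comm (a := j)]
    split_ifs
    · ring
    · simp
  obtain ⟨φ, hφ⟩ := hC (PowerSeries k) 0 hevg hevh (by
    change IsUnit (ev _)
    rw [AlgHom.map_det]
    convert isUnit_one
    rw [← Matrix.det_one (n := Fin r)]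
    congr 1
    ext1 i j
    simp [hevJ, Matrix.one_apply])
  let z : Fin n → C := fun l ↦ aeval t (Y l)
  have hz : ∀ p : MvPolynomial (Fin n) k, aeval z p = aeval t (aeval Y p) := fun p ↦
    (comp_aeval_apply (f := Y) ((aeval t : _ →ₐ[A] C).restrictScalars k) p).symm
  have hφt : ∀ P, φ (aeval t P) = ev P := fun P ↦
    (comp_aeval_apply t φ P).trans (congrArg (fun y ↦ aeval y P) (funext hφ))
  have hsmooth : Algebra.Smooth k C := Algebra.Smooth.comp k A C
  refine ⟨C, inferInstance, inferInstance, hsmooth, z, φ.restrictScalars k, fun l ↦ ?_,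
    fun p hp ↦ ?_⟩
  · have := hev (X l)
    rw [aeval_X, aeval_X] at this
    exact (hφt _).trans this
  · have hker : Ideal.span (Set.range f) ≤ RingHom.ker (aeval z : _ →ₐ[k] C) := by
      rw [Ideal.span_le]
      rintro _ ⟨j, rfl⟩
      simp [hz, hg, htg]
    have h0 : aeval z (s * p) = 0 := hker (hsf p hp)
    have hx0 : x ≠ 0 := fun h ↦ PowerSeries.X_ne_zero (by rw [← hx, h, map_zero])
    rw [map_mul, hz s, hh, map_mul, AlgHom.commutes, mul_assoc, ← Algebra.smul_def] at h0
    have h1 : aeval t h * aeval z p = 0 :=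
      (smul_eq_zero_iff_right (pow_ne_zero e hx0)).mp h0
    exact (hth.mul_right_eq_zero).mp h1

end

/-- Let `k` be a field and `B` a `k`-algebra of finite type.  Then every `k`-algebra
morphism `v : B → k⟦x⟧` into the ring of formal power series over `k` factors through a
smooth `k`-algebra `C`. -/
theorem factors_through_smooth_of_map_to_powerSeries
    (k : Type u) [Field k] (B : Type u) [CommRing B] [Algebra k B]
    (hB : Algebra.FiniteType k B) (v : B →ₐ[k] PowerSeries k) :
    ∃ (C : Type u) (_ : CommRing C) (_ : Algebra k C), Algebra.Smooth k C ∧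
      ∃ (f : B →ₐ[k] C) (g : C →ₐ[k] PowerSeries k), v = g.comp f := by
  obtain ⟨n, π, hπ⟩ := Algebra.FiniteType.iff_quotient_mvPolynomial''.mp hB
  obtain ⟨C, _, _, hC, z, φ, hφ, hz⟩ :=
    exists_smooth_aeval_eq_zero fun l ↦ v (π (MvPolynomial.X l))
  have hker : ∀ p ∈ RingHom.ker π, MvPolynomial.aeval z p = 0 := fun p hp ↦ hz p <| by
    have h := MvPolynomial.comp_aeval_apply (f := MvPolynomial.X) (v.comp π) p
    rw [MvPolynomial.aeval_X_left_apply] at h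
    exact h.symm.trans (by simp [RingHom.mem_ker.mp hp])
  let F : B →ₐ[k] C := (Ideal.Quotient.liftₐ (RingHom.ker π) (MvPolynomial.aeval z) hker).comp
    (Ideal.quotientKerAlgEquivOfSurjective hπ).symm
  have hF : ∀ p, F (π p) = MvPolynomial.aeval z p := fun p ↦ by
    have : (Ideal.quotientKerAlgEquivOfSurjective hπ).symm (π p) = Ideal.Quotient.mk _ p :=
      (AlgEquiv.symm_apply_eq _).mpr rfl
    exact (congrArg (Ideal.Quotient.liftₐ _ _ hker) this).trans
      (Ideal.Quotient.lift_mk (RingHom.ker π) (MvPolynomial.aeval z).toRingHom hker)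
  refine ⟨C, inferInstance, inferInstance, hC, F, φ, ?_⟩
  rw [← AlgHom.cancel_right hπ]
  ext l : 1
  simp [hF, hφ]
end
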